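/- Let T, c > 0, let Λ : (0,∞) → (0,∞) be nondecreasing, and let a : ℝ × ℝ × ℝ × [0,T] → ℝ be continuous and positive with a(p,q,x,t) ≤ Λ(K) whenever |p| ≤ K. Let u : ℝ × [0,T] → ℝ be bounded and continuous, with continuous partial derivatives u_t, u_x, u_{xx} on ℝ × (0,T], satisfying u_t = a(u_x,u,x,t)·u_{xx} there, and suppose the initial data lies below the step function of height c: u(x,0) ≤ −c for all x < 0 and u(x,0) ≤ c for all x ∈ ℝ. Then for every x < 0 and every t ∈ (0,T]: u(x,t) ≤ (4c/|x|)·√(Λ(2c/|x|)·t/π) − c. -/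

import Mathlib

/-!
Fix `x₀ < 0` and put `K = 2c / |x₀|`, so that the line of slope `K` through `(x₀, -c)` reaches the
height `c` at `0`. The smoothed absolute value `√(y² + 4τ)` is a strict supersolution of the heat
equation. For `0 ≤ α < β` with `α + β = K`, the function
`-c + α (x - x₀) + β √((x - x₀)² + 4Lt)` then dominates the step at `t = 0`, tends to infinity
with `|x|`, and has slope at most `K` in absolute value. Since it is convex in `x`, it is a strict
supersolution for every coefficient that is bounded by `L` on slopes up to `K`. The comparison
principle bounds `u` by it; evaluate at `x₀` and let `β` decrease to `K / 2`. This gives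
`u ≤ K √(L t) - c`, which is better than the claim because `√π ≤ 2`.
-/

open Set Filter Topology

section DerivativeTests

variable {f f' : ℝ → ℝ} {m x : ℝ} {s : Set ℝ}

theorem second_deriv_nonpos_of_isLocalMax (hmax : IsLocalMax f x)
    (hf : ∀ᶠ y in 𝓝 x, HasDerivAt f (f' y) y) (hf' : HasDerivAt f' m x) : m ≤ 0 := by
  by_contra! hm
  have hderiv : deriv f =ᶠ[𝓝 x] f' := hf.mono fun y hy => hy.deriv
  have hmin : IsLocalMin f x := by
    refine isLocalMin_of_deriv_deriv_pos ?_ hmax.deriv_eq_zero hf.self_of_nhds.continuousAt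
    rwa [hderiv.deriv_eq, hf'.deriv]
  -- A point that is both a local minimum and a local maximum has a neighbourhood where `f` is
  -- constant.
  have hconst : f =ᶠ[𝓝 x] fun _ => f x := by
    filter_upwards [hmin, hmax] with y hmin hmax using le_antisymm hmax hmin
  have hzero : f' =ᶠ[𝓝 x] fun _ => 0 := by
    simpa using hderiv.symm.trans hconst.deriv
  exact hm.ne' (hf'.unique ((hasDerivAt_const x 0).congr_of_eventuallyEq hzero))

theorem deriv_nonneg_of_isLocalMaxOn_of_Icc_subset {y : ℝ} (hmax : IsLocalMaxOn f s x)
    (hf : HasDerivWithinAt f m s x) (hyx : y < x) (hs : Icc y x ⊆ s) : 0 ≤ m := by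
  have hcone : y - x ∈ posTangentConeAt s x :=
    sub_mem_posTangentConeAt_of_segment_subset (by rwa [segment_symm, segment_eq_Icc hyx.le])
  have hslope : (y - x) * m ≤ 0 := by
    simpa using hmax.hasFDerivWithinAt_nonpos hf.hasFDerivWithinAt hcone
  exact nonneg_of_mul_nonpos_right hslope (sub_neg.mpr hyx)

end DerivativeTests

/-- The functions `vt`, `vx`, `vxx` are the pointwise partial derivatives `v_t`, `v_x`, `v_xx` of
`v` on `ℝ × (0, T]`. The space variable comes first, and the time derivative is one-sided at the
final time `T`. -/
structure HasParabolicDerivs (T : ℝ) (v vt vx vxx : ℝ → ℝ → ℝ) : Prop where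
  time : ∀ x, ∀ t ∈ Ioc 0 T, HasDerivWithinAt (fun s => v x s) (vt x t) (Ioc 0 T) t
  space : ∀ x, ∀ t ∈ Ioc 0 T, HasDerivAt (fun y => v y t) (vx x t) x
  space_space : ∀ x, ∀ t ∈ Ioc 0 T, HasDerivAt (fun y => vx y t) (vxx x t) x

section Comparison

variable {T : ℝ} {v vt vx vxx u ut ux uxx w wt wx wxx : ℝ → ℝ → ℝ}

theorem HasParabolicDerivs.sub (hu : HasParabolicDerivs T u ut ux uxx)
    (hw : HasParabolicDerivs T w wt wx wxx) :
    HasParabolicDerivs T (fun x t => u x t - w x t) (fun x t => ut x t - wt x t)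
      (fun x t => ux x t - wx x t) (fun x t => uxx x t - wxx x t) where
  time x t ht := (hu.time x t ht).sub (hw.time x t ht)
  space x t ht := (hu.space x t ht).sub (hw.space x t ht)
  space_space x t ht := (hu.space_space x t ht).sub (hw.space_space x t ht)

theorem exists_pos_max_of_eventually_nonpos_cocompact
    (hv : ContinuousOn (fun z : ℝ × ℝ => v z.1 z.2) (univ ×ˢ Icc 0 T))
    (hfar : ∀ᶠ x in cocompact ℝ, ∀ t ∈ Icc 0 T, v x t ≤ 0)
    (hpos : ∃ x, ∃ t ∈ Icc 0 T, 0 < v x t) :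
    ∃ x, ∃ t ∈ Icc 0 T, 0 < v x t ∧ ∀ y, ∀ s ∈ Icc 0 T, v y s ≤ v x t := by
  obtain ⟨x₀, t₀, ht₀, hpos⟩ := hpos
  obtain ⟨S, hS, hfar⟩ := mem_cocompact.mp hfar
  have hle : ∀ᶠ z in cocompact (ℝ × ℝ) ⊓ 𝓟 (univ ×ˢ Icc 0 T), v z.1 z.2 ≤ v x₀ t₀ := by
    rw [eventually_inf_principal]
    filter_upwards [(hS.prod isCompact_Icc).compl_mem_cocompact] with z hz hzT
    exact (hfar (fun h => hz ⟨h, hzT.2⟩) z.2 hzT.2).trans hpos.le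
  obtain ⟨⟨x, t⟩, hxt, hmax⟩ := hv.exists_isMaxOn' (isClosed_univ.prod isClosed_Icc)
    (x₀ := (x₀, t₀)) ⟨mem_univ _, ht₀⟩ hle
  have hglobal : ∀ y, ∀ s ∈ Icc 0 T, v y s ≤ v x t :=
    fun y s hs => hmax (mk_mem_prod (mem_univ y) hs)
  exact ⟨x, t, hxt.2, hpos.trans_le (hglobal x₀ t₀ ht₀), hglobal⟩

theorem nonpos_of_time_deriv_neg_at_pos_max (hv : HasParabolicDerivs T v vt vx vxx)
    (hcont : ContinuousOn (fun z : ℝ × ℝ => v z.1 z.2) (univ ×ˢ Icc 0 T))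
    (hneg : ∀ x, ∀ t ∈ Ioc 0 T, 0 < v x t → vx x t = 0 → vxx x t ≤ 0 → vt x t < 0)
    (hinit : ∀ x, v x 0 ≤ 0) (hfar : ∀ᶠ x in cocompact ℝ, ∀ t ∈ Icc 0 T, v x t ≤ 0) :
    ∀ x, ∀ t ∈ Icc 0 T, v x t ≤ 0 := by
  by_contra! hpos
  obtain ⟨x, t, ht, hpos, hmax⟩ :=
    exists_pos_max_of_eventually_nonpos_cocompact hcont hfar hpos
  have ht_pos : 0 < t := ht.1.lt_of_ne (by rintro rfl; exact hpos.not_ge (hinit x))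
  have htT : t ∈ Ioc 0 T := ⟨ht_pos, ht.2⟩
  have hxmax : IsLocalMax (fun y => v y t) x := Eventually.of_forall fun y => hmax y t ht
  have hvx : vx x t = 0 := hxmax.hasDerivAt_eq_zero (hv.space x t htT)
  have hvxx : vxx x t ≤ 0 := second_deriv_nonpos_of_isLocalMax hxmax
    (Eventually.of_forall fun y => hv.space y t htT) (hv.space_space x t htT)
  have htmax : IsMaxOn (fun s => v x s) (Ioc 0 T) t :=
    fun s hs => hmax x s (Ioc_subset_Icc_self hs)
  have hvt : 0 ≤ vt x t := deriv_nonneg_of_isLocalMaxOn_of_Icc_subset htmax.localize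
    (hv.time x t htT) (half_lt_self ht_pos) fun s hs =>
      ⟨(half_pos ht_pos).trans_le hs.1, hs.2.trans ht.2⟩
  exact hvt.not_gt (hneg x t htT hpos hvx hvxx)

-- The coefficient of the supersolution inequality is evaluated at the values of `u`, not of `w`:
-- at a critical point of `u - w` the slopes agree but the values do not.
theorem le_of_strict_supersolution {a : ℝ → ℝ → ℝ → ℝ → ℝ}
    (hu : HasParabolicDerivs T u ut ux uxx) (hw : HasParabolicDerivs T w wt wx wxx)
    (hu_cont : ContinuousOn (fun z : ℝ × ℝ => u z.1 z.2) (univ ×ˢ Icc 0 T))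
    (hw_cont : ContinuousOn (fun z : ℝ × ℝ => w z.1 z.2) (univ ×ˢ Icc 0 T))
    (ha_nonneg : ∀ p q x, ∀ t ∈ Ioc 0 T, 0 ≤ a p q x t)
    (hsub : ∀ x, ∀ t ∈ Ioc 0 T, ut x t ≤ a (ux x t) (u x t) x t * uxx x t)
    (hsuper : ∀ x, ∀ t ∈ Ioc 0 T, a (wx x t) (u x t) x t * wxx x t < wt x t)
    (hinit : ∀ x, u x 0 ≤ w x 0)
    (hfar : ∀ᶠ x in cocompact ℝ, ∀ t ∈ Icc 0 T, u x t ≤ w x t) :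
    ∀ x, ∀ t ∈ Icc 0 T, u x t ≤ w x t := by
  simp only [← sub_nonpos (b := w _ _)] at hinit hfar ⊢
  refine nonpos_of_time_deriv_neg_at_pos_max (hu.sub hw) (hu_cont.sub hw_cont) ?_ hinit hfar
  intro x t ht _ hx hxx
  have hslope : ux x t = wx x t := sub_eq_zero.mp hx
  refine sub_neg.mpr ?_
  calc ut x t ≤ a (ux x t) (u x t) x t * uxx x t := hsub x t ht
    _ ≤ a (ux x t) (u x t) x t * wxx x t :=
      mul_le_mul_of_nonneg_left (sub_nonpos.mp hxx) (ha_nonneg _ _ x t ht)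
    _ < wt x t := by rw [hslope]; exact hsuper x t ht

end Comparison

/-- A smoothing of `|y|`, equal to it at `τ = 0`, which is for `τ > 0` a strict supersolution of
the heat equation `v_τ = v_yy`. -/
noncomputable def smoothAbs (y τ : ℝ) : ℝ := √(y ^ 2 + 4 * τ)

section SmoothAbs

variable {y τ : ℝ}

theorem continuous_smoothAbs : Continuous fun z : ℝ × ℝ => smoothAbs z.1 z.2 := by
  unfold smoothAbs
  fun_prop

theorem smoothAbs_zero_left (τ : ℝ) : smoothAbs 0 τ = 2 * √τ := by
  rw [smoothAbs, zero_pow two_ne_zero, zero_add, Real.sqrt_mul (by norm_num),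
    show (4 : ℝ) = 2 ^ 2 by norm_num, Real.sqrt_sq zero_le_two]

theorem abs_le_smoothAbs (hτ : 0 ≤ τ) : |y| ≤ smoothAbs y τ :=
  Real.abs_le_sqrt (by linarith)

theorem smoothAbs_pos (hτ : 0 < τ) : 0 < smoothAbs y τ :=
  Real.sqrt_pos.mpr (by positivity)

theorem smoothAbs_sq (hτ : 0 ≤ τ) : smoothAbs y τ ^ 2 = y ^ 2 + 4 * τ :=
  Real.sq_sqrt (by positivity)

theorem abs_div_smoothAbs_le_one (hτ : 0 ≤ τ) : |y / smoothAbs y τ| ≤ 1 := by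
  rw [abs_div, abs_of_nonneg ((abs_nonneg y).trans (abs_le_smoothAbs hτ))]
  exact div_le_one_of_le₀ (abs_le_smoothAbs hτ) ((abs_nonneg y).trans (abs_le_smoothAbs hτ))

theorem hasDerivAt_smoothAbs_space (hτ : 0 < τ) :
    HasDerivAt (fun y => smoothAbs y τ) (y / smoothAbs y τ) y := by
  have hsq : HasDerivAt (fun y => y ^ 2 + 4 * τ) (2 * y) y := by
    simpa using (hasDerivAt_pow 2 y).add_const (4 * τ)
  refine (hsq.sqrt (by positivity)).congr_deriv ?_
  exact mul_div_mul_left y _ two_ne_zero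

theorem hasDerivAt_smoothAbs_space_space (hτ : 0 < τ) :
    HasDerivAt (fun y => y / smoothAbs y τ) (4 * τ / smoothAbs y τ ^ 3) y := by
  have hpos := smoothAbs_pos (y := y) hτ
  refine ((hasDerivAt_id' y).div (hasDerivAt_smoothAbs_space hτ) hpos.ne').congr_deriv ?_
  field_simp
  linear_combination smoothAbs_sq (y := y) hτ.le

theorem hasDerivAt_smoothAbs_time (hτ : 0 < τ) :
    HasDerivAt (fun τ => smoothAbs y τ) (2 / smoothAbs y τ) τ := by
  have hlin : HasDerivAt (fun τ => y ^ 2 + 4 * τ) 4 τ := by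
    simpa using ((hasDerivAt_id' τ).const_mul 4).const_add (y ^ 2)
  refine (hlin.sqrt (by positivity)).congr_deriv ?_
  rw [smoothAbs]
  ring

theorem smoothAbs_strict_supersolution (hτ : 0 < τ) :
    4 * τ / smoothAbs y τ ^ 3 < 2 / smoothAbs y τ := by
  have hpos := smoothAbs_pos (y := y) hτ
  have hsq : 4 * τ < 2 * smoothAbs y τ ^ 2 := by
    rw [smoothAbs_sq hτ.le]
    nlinarith [sq_nonneg y]
  rw [div_lt_div_iff₀ (by positivity) hpos]
  calc 4 * τ * smoothAbs y τ < 2 * smoothAbs y τ ^ 2 * smoothAbs y τ := by gcongr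
    _ = 2 * smoothAbs y τ ^ 3 := by ring

end SmoothAbs

/-- The barrier with vertex at `(x₀, b)`: a smoothing of `b + α (x - x₀) + β |x - x₀|`, which it
equals at `t = 0`, spreading with diffusivity `L`. -/
noncomputable def barrier (L b α β x₀ x t : ℝ) : ℝ :=
  b + α * (x - x₀) + β * smoothAbs (x - x₀) (L * t)

section Barrier

variable {T L b α β x₀ x t : ℝ}

theorem continuous_barrier : Continuous fun z : ℝ × ℝ => barrier L b α β x₀ z.1 z.2 := by
  have hsmooth : Continuous fun z : ℝ × ℝ => smoothAbs (z.1 - x₀) (L * z.2) :=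
    continuous_smoothAbs.comp (by fun_prop : Continuous fun z : ℝ × ℝ => (z.1 - x₀, L * z.2))
  unfold barrier
  fun_prop

theorem barrier_vertex (L b α β x₀ t : ℝ) :
    barrier L b α β x₀ x₀ t = b + 2 * β * √(L * t) := by
  rw [barrier, sub_self, smoothAbs_zero_left]
  ring

theorem le_barrier (hβ : 0 ≤ β) (hLt : 0 ≤ L * t) :
    b + α * (x - x₀) + β * |x - x₀| ≤ barrier L b α β x₀ x t := by
  unfold barrier
  gcongr
  exact abs_le_smoothAbs hLt

theorem hasParabolicDerivs_barrier (hL : 0 < L) :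
    HasParabolicDerivs T (barrier L b α β x₀)
      (fun x t => β * (L * (2 / smoothAbs (x - x₀) (L * t))))
      (fun x t => α + β * ((x - x₀) / smoothAbs (x - x₀) (L * t)))
      (fun x t => β * (4 * (L * t) / smoothAbs (x - x₀) (L * t) ^ 3)) where
  time x t ht := by
    have hlin : HasDerivAt (fun s => L * s) L t := by simpa using (hasDerivAt_id' t).const_mul L
    have hsmooth := (hasDerivAt_smoothAbs_time (y := x - x₀) (mul_pos hL ht.1)).comp t hlin
    rw [mul_comm L (2 / _)]
    exact ((hsmooth.const_mul β).const_add _).hasDerivWithinAt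
  space x t ht := by
    have hsmooth := (hasDerivAt_smoothAbs_space (mul_pos hL ht.1)).comp_sub_const x x₀
    have hlin : HasDerivAt (fun y => b + α * (y - x₀)) α x := by
      simpa using (((hasDerivAt_id' x).sub_const x₀).const_mul α).const_add b
    exact hlin.add (hsmooth.const_mul β)
  space_space x t ht := by
    have hsmooth := (hasDerivAt_smoothAbs_space_space (mul_pos hL ht.1)).comp_sub_const x x₀
    exact (hsmooth.const_mul β).const_add α

theorem abs_barrier_slope_le (hα : 0 ≤ α) (hβ : 0 ≤ β) (hLt : 0 ≤ L * t) :
    |α + β * ((x - x₀) / smoothAbs (x - x₀) (L * t))| ≤ α + β := by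
  calc |α + β * ((x - x₀) / smoothAbs (x - x₀) (L * t))|
      ≤ |α| + |β * ((x - x₀) / smoothAbs (x - x₀) (L * t))| := abs_add_le _ _
    _ = α + β * |(x - x₀) / smoothAbs (x - x₀) (L * t)| := by
      rw [abs_mul, abs_of_nonneg hα, abs_of_nonneg hβ]
    _ ≤ α + β := by
      gcongr
      exact mul_le_of_le_one_right hβ (abs_div_smoothAbs_le_one hLt)

theorem barrier_strict_supersolution {A : ℝ} (hAL : A ≤ L) (hL : 0 < L) (hβ : 0 < β) (ht : 0 < t) :
    A * (β * (4 * (L * t) / smoothAbs (x - x₀) (L * t) ^ 3)) <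
      β * (L * (2 / smoothAbs (x - x₀) (L * t))) := by
  have hLt := mul_pos hL ht
  have hpos := smoothAbs_pos (y := x - x₀) hLt
  calc A * (β * (4 * (L * t) / smoothAbs (x - x₀) (L * t) ^ 3))
      ≤ L * (β * (4 * (L * t) / smoothAbs (x - x₀) (L * t) ^ 3)) := by gcongr
    _ < L * (β * (2 / smoothAbs (x - x₀) (L * t))) := by
      gcongr _ * (_ * ?_)
      exact smoothAbs_strict_supersolution hLt
    _ = β * (L * (2 / smoothAbs (x - x₀) (L * t))) := mul_left_comm _ _ _

theorem eventually_cocompact_forall_le_barrier (hL : 0 ≤ L) (hα : 0 ≤ α) (hαβ : α < β) (B : ℝ) :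
    ∀ᶠ x in cocompact ℝ, ∀ t, 0 ≤ t → B ≤ barrier L b α β x₀ x t := by
  have htendsto : Tendsto (fun x => b + (β - α) * |x - x₀|) (cocompact ℝ) atTop :=
    tendsto_atTop_add_const_left _ b <|
      (tendsto_dist_right_cocompact_atTop x₀).const_mul_atTop (sub_pos.mpr hαβ)
  filter_upwards [htendsto.eventually_ge_atTop B] with x hB t ht
  have hlin : -(α * |x - x₀|) ≤ α * (x - x₀) := by
    rw [← mul_neg]
    exact mul_le_mul_of_nonneg_left (neg_abs_le _) hα
  have hbarrier : b + α * (x - x₀) + β * |x - x₀| ≤ barrier L b α β x₀ x t :=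
    le_barrier (hα.trans hαβ.le) (mul_nonneg hL ht)
  linarith

end Barrier

section Displacement

variable {T c L : ℝ} {a : ℝ → ℝ → ℝ → ℝ → ℝ} {u ut ux uxx : ℝ → ℝ → ℝ}

theorem le_barrier_of_subsolution {b α β x₀ : ℝ} (hL : 0 < L) (hα : 0 ≤ α) (hαβ : α < β)
    (ha_nonneg : ∀ p q x, ∀ t ∈ Ioc 0 T, 0 ≤ a p q x t)
    (ha_le : ∀ p q x, ∀ t ∈ Ioc 0 T, |p| ≤ α + β → a p q x t ≤ L)
    (hu_bdd : ∃ B, ∀ x, ∀ t ∈ Icc 0 T, u x t ≤ B)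
    (hu_cont : ContinuousOn (fun z : ℝ × ℝ => u z.1 z.2) (univ ×ˢ Icc 0 T))
    (hu : HasParabolicDerivs T u ut ux uxx)
    (hsub : ∀ x, ∀ t ∈ Ioc 0 T, ut x t ≤ a (ux x t) (u x t) x t * uxx x t)
    (hinit : ∀ x, u x 0 ≤ b + α * (x - x₀) + β * |x - x₀|) :
    ∀ x, ∀ t ∈ Icc 0 T, u x t ≤ barrier L b α β x₀ x t := by
  have hβ : 0 < β := hα.trans_lt hαβ
  obtain ⟨B, hB⟩ := hu_bdd
  refine le_of_strict_supersolution hu (hasParabolicDerivs_barrier hL) hu_cont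
    continuous_barrier.continuousOn ha_nonneg hsub (fun x t ht => ?_)
    (fun x => (hinit x).trans (le_barrier hβ.le (mul_zero L).ge)) ?_
  · have hslope := abs_barrier_slope_le (x := x) (x₀ := x₀) hα hβ.le (mul_pos hL ht.1).le
    exact barrier_strict_supersolution (ha_le _ _ x t ht hslope) hL hβ ht.1
  · filter_upwards [eventually_cocompact_forall_le_barrier hL.le hα hαβ B] with x hx t ht
    exact (hB x t ht).trans (hx t ht.1)

theorem step_le_cone {α β x₀ x v : ℝ} (hα : 0 ≤ α) (hαβ : α ≤ β) (hx₀ : x₀ < 0)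
    (hslope : 2 * c ≤ (α + β) * |x₀|) (hneg : x < 0 → v ≤ -c) (hle : v ≤ c) :
    v ≤ -c + α * (x - x₀) + β * |x - x₀| := by
  rcases lt_or_ge x 0 with hx | hx
  · have hcone : 0 ≤ α * (x - x₀) + β * |x - x₀| := by
      nlinarith [neg_abs_le (x - x₀), abs_nonneg (x - x₀)]
    linarith [hneg hx]
  · rw [abs_of_neg hx₀] at hslope
    rw [abs_of_nonneg (by linarith)]
    nlinarith

theorem displacement_estimate_step_function_general (hc : 0 < c) (hL : 0 < L) {x₀ : ℝ}
    (hx₀ : x₀ < 0) (ha_nonneg : ∀ p q x, ∀ t ∈ Ioc 0 T, 0 ≤ a p q x t)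
    (ha_le : ∀ p q x, ∀ t ∈ Ioc 0 T, |p| ≤ 2 * c / |x₀| → a p q x t ≤ L)
    (hu_bdd : ∃ B, ∀ x, ∀ t ∈ Icc 0 T, u x t ≤ B)
    (hu_cont : ContinuousOn (fun z : ℝ × ℝ => u z.1 z.2) (univ ×ˢ Icc 0 T))
    (hu : HasParabolicDerivs T u ut ux uxx)
    (hsub : ∀ x, ∀ t ∈ Ioc 0 T, ut x t ≤ a (ux x t) (u x t) x t * uxx x t)
    (hinit_neg : ∀ x, x < 0 → u x 0 ≤ -c) (hinit : ∀ x, u x 0 ≤ c) :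
    ∀ t ∈ Icc 0 T, u x₀ t ≤ 2 * c / |x₀| * √(L * t) - c := by
  intro t ht
  have hx₀_abs : 0 < |x₀| := abs_pos.mpr hx₀.ne
  set K := 2 * c / |x₀| with hK_def
  have hK : 0 < K := by positivity
  have hbarrier : ∀ β ∈ Ioc (K / 2) K, u x₀ t ≤ -c + 2 * β * √(L * t) := by
    rintro β ⟨hKβ, hβK⟩
    have hα : 0 ≤ K - β := sub_nonneg.mpr hβK
    have hαβ : K - β < β := by linarith
    rw [← barrier_vertex L (-c) (K - β)]
    refine le_barrier_of_subsolution hL hα hαβ ha_nonneg ?_ hu_bdd hu_cont hu hsub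
      (fun x => step_le_cone hα hαβ.le hx₀ ?_ (hinit_neg x) (hinit x)) x₀ t ht
    · rwa [sub_add_cancel]
    · rw [sub_add_cancel, hK_def, div_mul_cancel₀ _ hx₀_abs.ne']
  have hlim : Tendsto (fun β => -c + 2 * β * √(L * t)) (𝓝[>] (K / 2))
      (𝓝 (-c + 2 * (K / 2) * √(L * t))) :=
    (Continuous.tendsto (by fun_prop) (K / 2)).mono_left nhdsWithin_le_nhds
  have hle : u x₀ t ≤ -c + 2 * (K / 2) * √(L * t) :=
    ge_of_tendsto hlim (eventually_of_mem (Ioc_mem_nhdsGT (half_lt_self hK)) hbarrier)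
  linarith

end Displacement

theorem sqrt_le_two_mul_sqrt_div_pi (r : ℝ) : √r ≤ 2 * √(r / Real.pi) := by
  have hpi : √Real.pi ≤ 2 := by
    rw [Real.sqrt_le_left zero_le_two]
    linarith [Real.pi_le_four]
  rw [Real.sqrt_div' r Real.pi_pos.le, ← mul_div_assoc, le_div_iff₀ (by positivity), mul_comm]
  gcongr

/-- Displacement estimate for a bounded entire solution whose
initial data lies below the step function of height `c`. -/
theorem displacement_estimate_step_function
    (T c : ℝ) (hT : 0 < T) (hc : 0 < c)
    (Λ : ℝ → ℝ) (hΛ_pos : ∀ s : ℝ, 0 < s → 0 < Λ s)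
    (hΛ_mono : ∀ s s' : ℝ, 0 < s → s ≤ s' → Λ s ≤ Λ s')
    (a : ℝ → ℝ → ℝ → ℝ → ℝ)
    (ha_cont : ContinuousOn (fun z : ℝ × ℝ × ℝ × ℝ => a z.1 z.2.1 z.2.2.1 z.2.2.2)
      (Set.univ ×ˢ Set.univ ×ˢ Set.univ ×ˢ Set.Icc 0 T))
    (ha_pos : ∀ p q x : ℝ, ∀ t ∈ Set.Icc (0:ℝ) T, 0 < a p q x t)
    (ha_ub : ∀ K : ℝ, 0 < K → ∀ p q x : ℝ, ∀ t ∈ Set.Icc (0:ℝ) T,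
      |p| ≤ K → a p q x t ≤ Λ K)
    (u ut ux uxx : ℝ → ℝ → ℝ)
    (hu_bdd : ∃ B : ℝ, ∀ x : ℝ, ∀ t ∈ Set.Icc (0:ℝ) T, |u x t| ≤ B)
    (hu_cont : ContinuousOn (fun z : ℝ × ℝ => u z.1 z.2) (Set.univ ×ˢ Set.Icc 0 T))
    (hut : ∀ x : ℝ, ∀ t ∈ Set.Ioc (0:ℝ) T,
      HasDerivWithinAt (fun s => u x s) (ut x t) (Set.Ioc 0 T) t)
    (hux : ∀ x : ℝ, ∀ t ∈ Set.Ioc (0:ℝ) T, HasDerivAt (fun y => u y t) (ux x t) x)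
    (huxx : ∀ x : ℝ, ∀ t ∈ Set.Ioc (0:ℝ) T, HasDerivAt (fun y => ux y t) (uxx x t) x)
    (hut_cont : ContinuousOn (fun z : ℝ × ℝ => ut z.1 z.2) (Set.univ ×ˢ Set.Ioc 0 T))
    (hux_cont : ContinuousOn (fun z : ℝ × ℝ => ux z.1 z.2) (Set.univ ×ˢ Set.Ioc 0 T))
    (huxx_cont : ContinuousOn (fun z : ℝ × ℝ => uxx z.1 z.2) (Set.univ ×ˢ Set.Ioc 0 T))
    (hpde : ∀ x : ℝ, ∀ t ∈ Set.Ioc (0:ℝ) T,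
      ut x t = a (ux x t) (u x t) x t * uxx x t)
    (hinit_neg : ∀ x : ℝ, x < 0 → u x 0 ≤ -c)
    (hinit : ∀ x : ℝ, u x 0 ≤ c) :
    ∀ x : ℝ, x < 0 → ∀ t ∈ Set.Ioc (0:ℝ) T,
      u x t ≤ (4 * c / |x|) * Real.sqrt (Λ (2 * c / |x|) * t / Real.pi) - c := by
  intro x hx t ht
  obtain ⟨B, hB⟩ := hu_bdd
  have hK : 0 < 2 * c / |x| := div_pos (mul_pos two_pos hc) (abs_pos.mpr hx.ne)
  calc u x t ≤ 2 * c / |x| * √(Λ (2 * c / |x|) * t) - c :=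
      displacement_estimate_step_function_general hc (hΛ_pos _ hK) hx
        (fun p q y s hs => (ha_pos p q y s (Ioc_subset_Icc_self hs)).le)
        (fun p q y s hs => ha_ub _ hK p q y s (Ioc_subset_Icc_self hs))
        ⟨B, fun y s hs => (abs_le.mp (hB y s hs)).2⟩ hu_cont ⟨hut, hux, huxx⟩
        (fun y s hs => (hpde y s hs).le) hinit_neg hinit t (Ioc_subset_Icc_self ht)
    _ ≤ 2 * c / |x| * (2 * √(Λ (2 * c / |x|) * t / Real.pi)) - c := by
      gcongr
      exact sqrt_le_two_mul_sqrt_div_pi _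
    _ = 4 * c / |x| * √(Λ (2 * c / |x|) * t / Real.pi) - c := by ring
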